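/- The property P(Φ,Ψ) — that the single-component amalgamation Φ+Ψ provides g-dinaturality — is decidable; it holds if and only if the left-hand side of the equation (cfnat), namely [R⟨1_C, f⟩] β(C,…,C) α(C,…,C) [T⟨f, 1_C⟩], reduces by D reduction to its right-hand side [R⟨f, 1_A⟩] β(A,…,A) α(A,…,A) [T⟨1_A, f⟩]. -/

import Mathlib

open CategoryTheory

universe u v

namespace GDin

/-! ### Graphs in the sense of the paper -/

/-- Vertices of a graph with `m` left-hand argument places, `n` right-hand argument
places and `g` auxiliary `G`-vertices. -/
abbrev Vtx (m n g : ℕ) := (Fin m ⊕ Fin n) ⊕ Fin g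

/-- The "same component" relation generated by a set of edges. -/
def Conn {V : Type*} (E : V → V → Prop) : V → V → Prop := Relation.EqvGen E

/-- A graph in the sense of the paper.  The sign (variance) functions `sL` (for the
left-hand argument places `x₁,…,x_m`) and `sR` (for the right-hand argument places
`y₁,…,y_n`) are parameters; `true` means positive (covariant), `false` negative.
The structure also carries the number `k` of connected components together with the
component classifier `π`. -/
structure GGraph (m n g : ℕ) (sL : Fin m → Bool) (sR : Fin n → Bool) : Type where
  edge : Vtx m n g → Vtx m n g → Prop
  symm : ∀ u v, edge u v → edge v u
  /-- condition 1: every vertex belongs to some edge -/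
  covered : ∀ v, ∃ w, edge v w
  /-- condition 2: an edge joins two left-hand argument places iff they have opposite
  signs and lie in the same component -/
  condX : ∀ i j : Fin m, edge (.inl (.inl i)) (.inl (.inl j)) ↔
    (sL i = !sL j ∧ Conn edge (.inl (.inl i)) (.inl (.inl j)))
  /-- condition 3 -/
  condY : ∀ i j : Fin n, edge (.inl (.inr i)) (.inl (.inr j)) ↔
    (sR i = !sR j ∧ Conn edge (.inl (.inr i)) (.inl (.inr j)))
  /-- condition 4 -/
  condXY : ∀ (i : Fin m) (j : Fin n), edge (.inl (.inl i)) (.inl (.inr j)) ↔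
    (sL i = sR j ∧ Conn edge (.inl (.inl i)) (.inl (.inr j)))
  /-- condition 5, first half: if a component contains an edge between two argument
  places then it contains no `G`-vertex -/
  condG₁ : ∀ v : Vtx m n g,
    (∃ u w : Fin m ⊕ Fin n, Conn edge (.inl u) v ∧ edge (.inl u) (.inl w)) →
      ∀ a : Fin g, ¬ Conn edge (.inr a) v
  /-- condition 5, second half: otherwise the component contains exactly one
  `G`-vertex -/
  condG₂ : ∀ v : Vtx m n g,
    (¬ ∃ u w : Fin m ⊕ Fin n, Conn edge (.inl u) v ∧ edge (.inl u) (.inl w)) →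
      ∃! a : Fin g, Conn edge (.inr a) v
  /-- condition 5: every other vertex of such a component is joined to the
  `G`-vertex by an edge -/
  condG₃ : ∀ (a : Fin g) (u : Fin m ⊕ Fin n),
    Conn edge (.inl u) (.inr a) → edge (.inl u) (.inr a)
  /-- the number of components -/
  k : ℕ
  /-- the component classifier -/
  π : Vtx m n g → Fin k
  π_surj : Function.Surjective π
  π_eq : ∀ u v, π u = π v ↔ Conn edge u v

namespace GGraph

variable {m n g : ℕ} {sL : Fin m → Bool} {sR : Fin n → Bool}

/-- component of the `i`-th left-hand argument place -/
def πL (Γ : GGraph m n g sL sR) (i : Fin m) : Fin Γ.k := Γ.π (.inl (.inl i))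

/-- component of the `j`-th right-hand argument place -/
def πR (Γ : GGraph m n g sL sR) (j : Fin n) : Fin Γ.k := Γ.π (.inl (.inr j))

end GGraph

/-! ### Variance-indexed categories and g-dinaturality -/

/-- `B` or `Bᵒᵖ` according to a variance. -/
def VarCat (B : Type u) [Category.{v} B] : Bool → Type u
  | true => B
  | false => Bᵒᵖ

instance (B : Type u) [Category.{v} B] : ∀ b, Category.{v} (VarCat B b)
  | true => (inferInstance : Category B)
  | false => (inferInstance : Category Bᵒᵖ)

variable {B : Type u} [Category.{v} B]

/-- The object of `B` or `Bᵒᵖ` with `P` at a positive argument place and `N` at a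
negative one. -/
def pairObj : (b : Bool) → B → B → VarCat B b
  | true, P, _ => P
  | false, _, N => Opposite.op N

/-- The morphism with `u` at a positive argument place and `v` (contravariantly) at a
negative one. -/
def pairHom : (b : Bool) → {P P' N N' : B} → (P ⟶ P') → (N' ⟶ N) →
    (pairObj b P N ⟶ pairObj b P' N')
  | true, _, _, _, _, u, _ => u
  | false, _, _, _, _, _, v => v.op

variable {ι : Type} {k : ℕ}

/-- The tuple of objects `⟨u,v⟩` with `u` in all positive and `v` in all negative
argument places. -/
@[reducible] def tupObj (s : ι → Bool) (P N : B) : ∀ i, VarCat B (s i) :=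
  fun i => pairObj (s i) P N

/-- The corresponding tuple of morphisms. -/
def tupHom (s : ι → Bool) {P P' N N' : B} (u : P ⟶ P') (v : N' ⟶ N) :
    (tupObj s P N ⟶ tupObj s P' N') :=
  fun i => pairHom (s i) u v

/-- The diagonal-like tuple of objects determined by an assignment of objects to
the components of a graph. -/
@[reducible] def diagObj (s : ι → Bool) (pl : ι → Fin k) (A : Fin k → B) :
    ∀ i, VarCat B (s i) :=
  fun i => pairObj (s i) (A (pl i)) (A (pl i))

/-- The tuple of objects obtained from the component assignment `A` by replacing the
value of component `c` by `P` at positive and `N` at negative argument places. -/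
def hexObj (s : ι → Bool) (pl : ι → Fin k) (c : Fin k) (A : Fin k → B) (P N : B) :
    ∀ i, VarCat B (s i) :=
  fun i => if pl i = c then pairObj (s i) P N else pairObj (s i) (A (pl i)) (A (pl i))

/-- The corresponding tuple of morphisms (identities outside component `c`). -/
def hexHom (s : ι → Bool) (pl : ι → Fin k) (c : Fin k) (A : Fin k → B)
    {P P' N N' : B} (u : P ⟶ P') (v : N' ⟶ N) :
    (hexObj s pl c A P N ⟶ hexObj s pl c A P' N') :=
  fun i => by
    unfold hexObj
    by_cases h : pl i = c
    · simp only [if_pos h]; exact pairHom (s i) u v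
    · simp only [if_neg h]; exact 𝟙 _

/-- update of a component assignment -/
def updF {γ : Type*} (A : Fin k → γ) (c : Fin k) (X : γ) : Fin k → γ :=
  fun j => if j = c then X else A j

theorem diag_upd (s : ι → Bool) (pl : ι → Fin k) (c : Fin k) (A : Fin k → B) (X : B) :
    diagObj s pl (updF A c X) = hexObj s pl c A X X := by
  funext i
  unfold diagObj hexObj updF
  by_cases h : pl i = c <;> simp [h]

/-- g-dinaturality of a transformation with respect to a graph: in every component
and for every morphism `f : P ⟶ Q` (all other components being kept fixed), the
g-dinaturality hexagon commutes. -/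
def IsGDin {m n gΓ : ℕ} {sL : Fin m → Bool} {sR : Fin n → Bool}
    (Γ : GGraph m n gΓ sL sR)
    (T : (∀ i : Fin m, VarCat B (sL i)) ⥤ B)
    (S : (∀ j : Fin n, VarCat B (sR j)) ⥤ B)
    (α : ∀ A : Fin Γ.k → B, T.obj (diagObj sL Γ.πL A) ⟶ S.obj (diagObj sR Γ.πR A)) :
    Prop :=
  ∀ (c : Fin Γ.k) (A : Fin Γ.k → B) (P Q : B) (f : P ⟶ Q),
    T.map (hexHom sL Γ.πL c A f (𝟙 Q)) ≫
      eqToHom (congrArg T.obj (diag_upd sL Γ.πL c A Q).symm) ≫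
      α (updF A c Q) ≫
      eqToHom (congrArg S.obj (diag_upd sR Γ.πR c A Q)) ≫
      S.map (hexHom sR Γ.πR c A (𝟙 Q) f)
    = T.map (hexHom sL Γ.πL c A (𝟙 P) f) ≫
      eqToHom (congrArg T.obj (diag_upd sL Γ.πL c A P).symm) ≫
      α (updF A c P) ≫
      eqToHom (congrArg S.obj (diag_upd sR Γ.πR c A P)) ≫
      S.map (hexHom sR Γ.πR c A f (𝟙 P))

/-- The g-dinaturality hexagon for a transformation whose graph has a single
component (so that only the signs of the argument places matter). -/
def SingleHex {ιx ιz : Type} (sx : ιx → Bool) (sz : ιz → Bool)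
    (F : (∀ i : ιx, VarCat B (sx i)) ⥤ B) (H : (∀ l : ιz, VarCat B (sz l)) ⥤ B)
    (φ : ∀ A : B, F.obj (tupObj sx A A) ⟶ H.obj (tupObj sz A A)) : Prop :=
  ∀ (P Q : B) (f : P ⟶ Q),
    F.map (tupHom sx f (𝟙 Q)) ≫ φ Q ≫ H.map (tupHom sz (𝟙 Q) f)
    = F.map (tupHom sx (𝟙 P) f) ≫ φ P ≫ H.map (tupHom sz f (𝟙 P))

section Amalg

variable {m n p gΦ gΨ : ℕ} {sx : Fin m → Bool} {sy : Fin n → Bool} {sz : Fin p → Bool}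

/-- Vertices of the amalgamation `Φ+Ψ` of two graphs sharing their `y` argument
places. -/
abbrev AVtx (m n p gΦ gΨ : ℕ) := (Fin m ⊕ Fin n ⊕ Fin p) ⊕ (Fin gΦ ⊕ Fin gΨ)

/-- inclusion of the vertices of `Φ` into the amalgamation -/
def phiInc : Vtx m n gΦ → AVtx m n p gΦ gΨ
  | .inl (.inl i) => .inl (.inl i)
  | .inl (.inr j) => .inl (.inr (.inl j))
  | .inr a => .inr (.inl a)

/-- inclusion of the vertices of `Ψ` into the amalgamation -/
def psiInc : Vtx n p gΨ → AVtx m n p gΦ gΨ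
  | .inl (.inl j) => .inl (.inr (.inl j))
  | .inl (.inr l) => .inl (.inr (.inr l))
  | .inr a => .inr (.inr a)

/-- The edges of the amalgamation `Φ+Ψ`, tagged (`true` for `Φ`-edges, `false` for
`Ψ`-edges); the edge sets are kept disjoint via the tag. -/
def amEdge (Φ : GGraph m n gΦ sx sy) (Ψ : GGraph n p gΨ sy sz) :
    Bool → AVtx m n p gΦ gΨ → AVtx m n p gΦ gΨ → Prop
  | true, u, v => ∃ u' v', Φ.edge u' v' ∧ phiInc u' = u ∧ phiInc v' = v
  | false, u, v => ∃ u' v', Ψ.edge u' v' ∧ psiInc u' = u ∧ psiInc v' = v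

/-- `Φ+Ψ` has a single (connected) component. -/
def AmalgConnected (Φ : GGraph m n gΦ sx sy) (Ψ : GGraph n p gΨ sy sz) : Prop :=
  ∀ u v : AVtx m n p gΦ gΨ,
    Conn (fun a b => amEdge Φ Ψ true a b ∨ amEdge Φ Ψ false a b) u v

/-- There is an alternating loop in `Φ+Ψ`: a closed alternating chain, i.e. a cyclic
sequence of vertices joined by edges of `Φ+Ψ` such that of any two adjacent edges one
belongs to `E_Φ` and the other to `E_Ψ`. -/
def HasAltLoop (Φ : GGraph m n gΦ sx sy) (Ψ : GGraph n p gΨ sy sz) : Prop :=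
  ∃ (q : ℕ) (vs : ℕ → AVtx m n p gΦ gΨ) (sd : ℕ → Bool),
    0 < q ∧ vs 0 = vs q ∧
    (∀ t, t < q → amEdge Φ Ψ (sd t) (vs t) (vs (t + 1))) ∧
    (∀ t, t + 1 < q → sd t ≠ sd (t + 1))

/-- `Φ+Ψ` provides g-dinaturality: for every category, all functors of the types
prescribed by the signs of the argument places and all g-dinatural `γ`, `δ` with
graphs `Φ`, `Ψ`, the composite family is g-dinatural with the (single-component)
composite graph `ΨΦ`, i.e. the composite hexagon commutes.  (For a
single-component graph, g-dinaturality depends only on the signs of the argument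
places.) -/
def Provides (Φ : GGraph m n gΦ sx sy) (Ψ : GGraph n p gΨ sy sz) : Prop :=
  ∀ {B : Type u} [Category.{v} B]
    (F : (∀ i : Fin m, VarCat B (sx i)) ⥤ B)
    (G : (∀ j : Fin n, VarCat B (sy j)) ⥤ B)
    (H : (∀ l : Fin p, VarCat B (sz l)) ⥤ B)
    (γ : ∀ A : Fin Φ.k → B, F.obj (diagObj sx Φ.πL A) ⟶ G.obj (diagObj sy Φ.πR A))
    (δ : ∀ A : Fin Ψ.k → B, G.obj (diagObj sy Ψ.πL A) ⟶ H.obj (diagObj sz Ψ.πR A)),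
    IsGDin Φ F G γ → IsGDin Ψ G H δ →
    SingleHex sx sz F H (fun A => γ (fun _ => A) ≫ δ (fun _ => A))

end Amalg

/-! ### The set `ℳ₀` of `CF`-normal terms of `ℳ`, and `D` reduction -/

/-- the possible arguments `1_A`, `1_C`, `f` of `T`, `S`, `R` in a term of `ℳ₀` -/
inductive MArg : Type
  | idA : MArg
  | idC : MArg
  | ff : MArg
deriving DecidableEq

section MZsec
variable {m n p gΦ gΨ : ℕ} {sx : Fin m → Bool} {sy : Fin n → Bool} {sz : Fin p → Bool}

/-- A term of `ℳ₀`, i.e. a `CF`-normal form `[R(t⃗)] β(Y⃗) [S(h⃗)] α(X⃗) [T(g⃗)]` of a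
term of `ℳ`, of type `T⟨A,C⟩ → R⟨C,A⟩`.  Such a term is completely determined by the
tuples `X⃗` and `Y⃗` of objects from `{A, C}` (here `true` codes `C` and `false`
codes `A`), subject to the typing (compatibility) condition below; the argument
vectors `g⃗`, `h⃗`, `t⃗` are then recovered by `MZ.g`, `MZ.h`, `MZ.t`. -/
structure MZ (Φ : GGraph m n gΦ sx sy) (Ψ : GGraph n p gΨ sy sz) : Type where
  Xv : Fin Φ.k → Bool
  Yv : Fin Ψ.k → Bool
  compat : ∀ j : Fin n,
    (sy j = true → ¬(Xv (Φ.πR j) = true ∧ Yv (Ψ.πL j) = false)) ∧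
    (sy j = false → ¬(Yv (Ψ.πL j) = true ∧ Xv (Φ.πR j) = false))

variable {Φ : GGraph m n gΦ sx sy} {Ψ : GGraph n p gΨ sy sz}

/-- the argument of `T` at the place `x_i` -/
def MZ.g (z : MZ Φ Ψ) (i : Fin m) : MArg :=
  if sx i then (if z.Xv (Φ.πL i) then .ff else .idA)
  else (if z.Xv (Φ.πL i) then .idC else .ff)

/-- the argument of `S` at the place `y_j` -/
def MZ.h (z : MZ Φ Ψ) (j : Fin n) : MArg :=
  if sy j then
    (if z.Xv (Φ.πR j) then .idC else if z.Yv (Ψ.πL j) then .ff else .idA)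
  else
    (if z.Yv (Ψ.πL j) then .idC else if z.Xv (Φ.πR j) then .ff else .idA)

/-- the argument of `R` at the place `z_l` -/
def MZ.t (z : MZ Φ Ψ) (l : Fin p) : MArg :=
  if sz l then (if z.Yv (Ψ.πR l) then .idC else .ff)
  else (if z.Yv (Ψ.πR l) then .ff else .idA)

/-- the argument occupying a (left- or right-hand) argument place of `Φ` -/
def MZ.occPhi (z : MZ Φ Ψ) : Fin m ⊕ Fin n → MArg := Sum.elim z.g z.h

/-- the argument occupying a (left- or right-hand) argument place of `Ψ` -/
def MZ.occPsi (z : MZ Φ Ψ) : Fin n ⊕ Fin p → MArg := Sum.elim z.h z.t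

/-- One step of `D` reduction on the set `ℳ₀`, applied to the entire term: an
`(α_i)`-step replaces the `i`-th argument `C` of `α` by `A`, provided all the
arguments `g_j` with `x_j ∈ Φ_i⁺` and all the arguments `h_j` with `y_j ∈ Φ_i⁻`
are `f`; the affected arguments are updated accordingly (which, the terms of `ℳ₀`
being determined by `X⃗` and `Y⃗`, is captured by updating `X⃗`).  `(β_i)`-steps are
analogous. -/
inductive DStep : MZ Φ Ψ → MZ Φ Ψ → Prop
  | alphaStep (z z' : MZ Φ Ψ) (i : Fin Φ.k) :
      z.Xv i = true →
      (∀ j : Fin m, sx j = true → Φ.πL j = i → z.g j = .ff) →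
      (∀ j : Fin n, sy j = false → Φ.πR j = i → z.h j = .ff) →
      z'.Xv = Function.update z.Xv i false →
      z'.Yv = z.Yv →
      DStep z z'
  | betaStep (z z' : MZ Φ Ψ) (i : Fin Ψ.k) :
      z.Yv i = true →
      (∀ j : Fin n, sy j = true → Ψ.πL j = i → z.h j = .ff) →
      (∀ l : Fin p, sz l = false → Ψ.πR l = i → z.t l = .ff) →
      z'.Yv = Function.update z.Yv i false →
      z'.Xv = z.Xv →
      DStep z z'

/-- a term of `ℳ₀` is in `D` normal form -/
def DNormal (z : MZ Φ Ψ) : Prop := ¬ ∃ z', DStep z z'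

end MZsec

section Nat7
variable {m n p gΦ gΨ : ℕ} {sx : Fin m → Bool} {sy : Fin n → Bool} {sz : Fin p → Bool}
variable (Φ : GGraph m n gΦ sx sy) (Ψ : GGraph n p gΨ sy sz)

/-- the left-hand side of the equation `(cfnat)`, as a term of `ℳ₀`:
`[R⟨1_C,f⟩] β(C,…,C) α(C,…,C) [T⟨f,1_C⟩]` -/
def cfnatLHS : MZ Φ Ψ :=
  ⟨fun _ => true, fun _ => true, fun _ => by simp⟩

/-- the right-hand side of the equation `(cfnat)`, as a term of `ℳ₀`:
`[R⟨f,1_A⟩] β(A,…,A) α(A,…,A) [T⟨1_A,f⟩]` -/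
def cfnatRHS : MZ Φ Ψ :=
  ⟨fun _ => false, fun _ => false, fun _ => by simp⟩

end Nat7

/-!
A term of `ℳ₀` amounts to the set of those components of `Φ` and `Ψ` that are occupied by `C`,
subject to one constraint at each `y_j`; the constraints form a relation `Blocks` between
components, for which the set has to be an upper set. A `D` step removes from this set a minimal
component, so the left-hand side of `(cfnat)` reduces to its right-hand side as soon as `Blocks`
has no cycle.

Reduction implies `P(Φ,Ψ)` because every `D` step preserves the composite denoted by a term: all
the tuples involved come from one thin category, in which the arguments of `F`, `G`, `H` around
the affected component factor through the ones of a g-dinaturality hexagon.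

Conversely, a cycle of `Blocks` refutes `P(Φ,Ψ)`: take for `G` a functor detecting the arguments
`f` at the places along cycles, for `γ` a family of identities, and let `δ` record whether `A`
occupies a component on a cycle. The sides of a hexagon in such a component put `f` at places of
opposite signs, but both signs occur along cycles, so `γ` and `δ` are g-dinatural; the composite
still distinguishes `A` from `C`.
-/

section SignedTuple

variable {J κ : Type*}

/-- Tuples of a covariant and a contravariant index from `J` at each argument place.  At a place
of sign `true` only the first index matters, at a place of sign `false` only the second, so that
this is merely a preorder. -/
def SignedTuple (_s : ι → Bool) (J : Type*) : Type _ := ι → J × J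

namespace SignedTuple

variable {s : ι → Bool}

/-- The signed tuple `⟨a, b⟩`. -/
def const (s : ι → Bool) (a b : J) : SignedTuple s J := fun _ => (a, b)

/-- The signed tuple of indices read off from an assignment `X` of indices to components. -/
def diag (s : ι → Bool) (pl : ι → κ) (X : κ → J) : SignedTuple s J := fun i => (X (pl i), X (pl i))

/-- The signed tuple indexing `hexObj`: `⟨a, b⟩` in component `c`, diagonal elsewhere. -/
def hex [DecidableEq κ] (s : ι → Bool) (pl : ι → κ) (c : κ) (X : κ → J) (a b : J) :
    SignedTuple s J :=
  fun i => if pl i = c then (a, b) else (X (pl i), X (pl i))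

section Hex

variable [DecidableEq κ] {pl : ι → κ} {c : κ} {X : κ → J} {a : J}

theorem diag_eq_hex : diag s pl X = hex s pl c X (X c) (X c) := by
  funext i
  by_cases h : pl i = c <;> simp [diag, hex, h]

theorem diag_update_eq_hex : diag s pl (Function.update X c a) = hex s pl c X a a := by
  funext i
  by_cases h : pl i = c <;> simp [diag, hex, h]

end Hex

variable [Preorder J]

instance : Preorder (SignedTuple s J) where
  le p q := ∀ i, (s i = true → (p i).1 ≤ (q i).1) ∧ (s i = false → (q i).2 ≤ (p i).2)
  le_refl _ _ := ⟨fun _ => le_rfl, fun _ => le_rfl⟩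
  le_trans _ _ _ h h' i :=
    ⟨fun hs => ((h i).1 hs).trans ((h' i).1 hs), fun hs => ((h' i).2 hs).trans ((h i).2 hs)⟩

theorem bot_top_le [BoundedOrder J] (p : SignedTuple s J) : const s ⊥ ⊤ ≤ p :=
  fun _ => ⟨fun _ => bot_le, fun _ => le_top⟩

theorem le_top_bot [BoundedOrder J] (p : SignedTuple s J) : p ≤ const s ⊤ ⊥ :=
  fun _ => ⟨fun _ => le_top, fun _ => bot_le⟩

section Hex

variable [DecidableEq κ] {pl : ι → κ} {c : κ} {X : κ → J} {a b a' b' : J}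

theorem hex_le_hex (ha : a ≤ a') (hb : b' ≤ b) : hex s pl c X a b ≤ hex s pl c X a' b' := by
  intro i
  by_cases h : pl i = c <;> simp [hex, h, ha, hb]

theorem le_hex {p : SignedTuple s J} (h : p ≤ diag s pl X)
    (h' : p ≤ diag s pl (Function.update X c a)) : p ≤ hex s pl c X a (X c) := by
  intro i
  by_cases hi : pl i = c
  · simpa [hex, diag, hi] using And.intro (h' i).1 (h i).2
  · simpa [hex, diag, hi] using h i

theorem hex_le {p : SignedTuple s J} (h : diag s pl X ≤ p)
    (h' : diag s pl (Function.update X c a) ≤ p) : hex s pl c X (X c) a ≤ p := by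
  intro i
  by_cases hi : pl i = c
  · simpa [hex, diag, hi] using And.intro (h i).1 (h' i).2
  · simpa [hex, diag, hi] using h i

end Hex

/-- The morphism between the values of `E : J ⥤ B` at one argument place of the given sign. -/
def mapPlace (E : J ⥤ B) : (b : Bool) → {p q : J × J} → (b = true → p.1 ≤ q.1) →
    (b = false → q.2 ≤ p.2) →
    (pairObj b (E.obj p.1) (E.obj p.2) ⟶ pairObj b (E.obj q.1) (E.obj q.2))
  | true, _, _, h, _ => E.map (homOfLE (h rfl))
  | false, _, _, _, h => (E.map (homOfLE (h rfl))).op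

theorem mapPlace_self (E : J ⥤ B) (b : Bool) {p : J × J} (h : b = true → p.1 ≤ p.1)
    (h' : b = false → p.2 ≤ p.2) : mapPlace E b h h' = 𝟙 _ := by
  cases b
  · exact congrArg Quiver.Hom.op (E.map_id _)
  · exact E.map_id _

theorem mapPlace_comp (E : J ⥤ B) (b : Bool) {p q r : J × J} (h₁ : b = true → p.1 ≤ q.1)
    (h₁' : b = false → q.2 ≤ p.2) (h₂ : b = true → q.1 ≤ r.1) (h₂' : b = false → r.2 ≤ q.2) :
    mapPlace E b h₁ h₁' ≫ mapPlace E b h₂ h₂' =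
      mapPlace E b (fun hb => (h₁ hb).trans (h₂ hb)) (fun hb => (h₂' hb).trans (h₁' hb)) := by
  cases b
  · exact congrArg Quiver.Hom.op (E.map_comp (homOfLE (h₂' rfl)) (homOfLE (h₁' rfl))).symm
  · exact (E.map_comp (homOfLE (h₁ rfl)) (homOfLE (h₂ rfl))).symm

theorem mapPlace_eq_pairHom (E : J ⥤ B) (b : Bool) {p q : J × J} (h₁ : p.1 ≤ q.1)
    (h₂ : q.2 ≤ p.2) :
    mapPlace E b (fun _ => h₁) (fun _ => h₂) =
      pairHom b (E.map (homOfLE h₁)) (E.map (homOfLE h₂)) := by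
  cases b <;> rfl

/-- The extension of `E : J ⥤ B` to tuples of objects of `B` and `Bᵒᵖ`. -/
def functor (E : J ⥤ B) (s : ι → Bool) : SignedTuple s J ⥤ ∀ i, VarCat B (s i) where
  obj p i := pairObj (s i) (E.obj (p i).1) (E.obj (p i).2)
  map h i := mapPlace E (s i) (leOfHom h i).1 (leOfHom h i).2
  map_id _ := funext fun _ => mapPlace_self E _ _ _
  map_comp _ _ := funext fun _ => (mapPlace_comp E _ _ _ _ _).symm

theorem functor_map_const (E : J ⥤ B) {a b a' b' : J} (ha : a ≤ a') (hb : b' ≤ b)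
    (h : const s a b ⟶ const s a' b') :
    (functor E s).map h = tupHom s (E.map (homOfLE ha)) (E.map (homOfLE hb)) :=
  funext fun i => mapPlace_eq_pairHom E (s i) ha hb

theorem functor_obj_hex (E : J ⥤ B) (pl : ι → Fin k) (c : Fin k) (X : Fin k → J) (a b : J) :
    (functor E s).obj (hex s pl c X a b) =
      hexObj s pl c (fun j => E.obj (X j)) (E.obj a) (E.obj b) := by
  funext i
  by_cases h : pl i = c <;> simp [functor, hex, hexObj, h]

theorem mapPlace_heq (E : J ⥤ B) (b : Bool) {p q p' q' : J × J} (hp : p = p') (hq : q = q')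
    (h₁ : b = true → p.1 ≤ q.1) (h₂ : b = false → q.2 ≤ p.2) (h₁' : b = true → p'.1 ≤ q'.1)
    (h₂' : b = false → q'.2 ≤ p'.2) : mapPlace E b h₁ h₂ ≍ mapPlace E b h₁' h₂' := by
  subst hp hq
  rfl

theorem hexHom_heq_of_eq (pl : ι → Fin k) (c : Fin k) (A : Fin k → B) {P P' N N' : B}
    (u : P ⟶ P') (v : N' ⟶ N) {i : ι} (h : pl i = c) :
    hexHom s pl c A u v i ≍ pairHom (s i) u v := by
  unfold hexHom
  rw [dif_pos h]
  exact cast_heq _ _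

theorem hexHom_heq_of_ne (pl : ι → Fin k) (c : Fin k) (A : Fin k → B) {P P' N N' : B}
    (u : P ⟶ P') (v : N' ⟶ N) {i : ι} (h : pl i ≠ c) :
    hexHom s pl c A u v i ≍ 𝟙 (pairObj (s i) (A (pl i)) (A (pl i))) := by
  unfold hexHom
  rw [dif_neg h]
  exact cast_heq _ _

theorem functor_map_hex (E : J ⥤ B) {pl : ι → Fin k} {c : Fin k} {X : Fin k → J}
    {a b a' b' : J} (ha : a ≤ a') (hb : b' ≤ b) {p q : SignedTuple s J}
    (hp : p = hex s pl c X a b) (hq : q = hex s pl c X a' b') (h : p ⟶ q) :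
    (functor E s).map h = eqToHom (hp ▸ functor_obj_hex E pl c X a b) ≫
      hexHom s pl c (fun j => E.obj (X j)) (E.map (homOfLE ha)) (E.map (homOfLE hb)) ≫
      eqToHom (hq ▸ (functor_obj_hex E pl c X a' b').symm) := by
  subst hp hq
  rw [conj_eqToHom_iff_heq']
  refine Function.hfunext rfl fun i _ hi => ?_
  obtain rfl := eq_of_heq hi
  change mapPlace E (s i) _ _ ≍ _
  by_cases hi : pl i = c
  · refine .trans ?_ (hexHom_heq_of_eq pl c _ _ _ hi).symm
    rw [← mapPlace_eq_pairHom E (s i) (p := (a, b)) (q := (a', b')) ha hb]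
    exact mapPlace_heq E (s i) (if_pos hi) (if_pos hi) _ _ _ _
  · refine .trans ?_ (hexHom_heq_of_ne pl c _ _ _ hi).symm
    rw [← mapPlace_self E (s i) (p := (X (pl i), X (pl i))) (fun _ => le_rfl) (fun _ => le_rfl)]
    exact mapPlace_heq E (s i) (if_neg hi) (if_neg hi) _ _ _ _

end SignedTuple

end SignedTuple

open SignedTuple

section Family

variable {J : Type*} [Preorder J] {m n gΓ : ℕ} {sL : Fin m → Bool} {sR : Fin n → Bool}
  {T : (∀ i : Fin m, VarCat B (sL i)) ⥤ B} {S : (∀ j : Fin n, VarCat B (sR j)) ⥤ B}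

/-- The member of the family `α` at the objects `E.obj (X j)`, regarded as a morphism between
values of `SignedTuple.functor`. -/
def along {pL : Fin m → Fin k} {pR : Fin n → Fin k}
    (α : ∀ A : Fin k → B, T.obj (diagObj sL pL A) ⟶ S.obj (diagObj sR pR A)) (E : J ⥤ B)
    (X : Fin k → J) :
    T.obj ((functor E sL).obj (diag sL pL X)) ⟶ S.obj ((functor E sR).obj (diag sR pR X)) :=
  α fun j => E.obj (X j)

theorem along_eq_eqToHom_conj {pL : Fin m → Fin k} {pR : Fin n → Fin k}
    (α : ∀ A : Fin k → B, T.obj (diagObj sL pL A) ⟶ S.obj (diagObj sR pR A)) (E : J ⥤ B)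
    (X : Fin k → J) {A : Fin k → B} (h : A = fun j => E.obj (X j)) :
    along α E X =
      eqToHom (by rw [h]; rfl) ≫ α A ≫ eqToHom (by rw [h]; rfl) := by
  subst h
  exact ((Category.id_comp _).trans (Category.comp_id _)).symm

theorem updF_obj_eq_obj_update (E : J ⥤ B) (X : Fin k → J) (c : Fin k) (a : J) :
    updF (fun j => E.obj (X j)) c (E.obj a) = fun j => E.obj (Function.update X c a j) := by
  funext j
  by_cases h : j = c <;> simp [updF, h]

variable {Γ : GGraph m n gΓ sL sR}
  {α : ∀ A : Fin Γ.k → B, T.obj (diagObj sL Γ.πL A) ⟶ S.obj (diagObj sR Γ.πR A)}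
  {c : Fin Γ.k} {X : Fin Γ.k → J} {a : J}

namespace IsGDin

theorem map_hex_comp_along (hα : IsGDin Γ T S α) (E : J ⥤ B) (ha : a ≤ X c)
    (l : hex sL Γ.πL c X a (X c) ⟶ diag sL Γ.πL X)
    (l' : hex sL Γ.πL c X a (X c) ⟶ diag sL Γ.πL (Function.update X c a))
    (r : diag sR Γ.πR X ⟶ hex sR Γ.πR c X (X c) a)
    (r' : diag sR Γ.πR (Function.update X c a) ⟶ hex sR Γ.πR c X (X c) a) :
    T.map ((functor E sL).map l) ≫ along α E X ≫ S.map ((functor E sR).map r) =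
      T.map ((functor E sL).map l') ≫ along α E (Function.update X c a) ≫
        S.map ((functor E sR).map r') := by
  have hexagon := hα c (fun j => E.obj (X j)) _ _ (E.map (homOfLE ha))
  have hexagon' := congrArg (fun t =>
    eqToHom (congrArg T.obj (functor_obj_hex E Γ.πL c X a (X c))) ≫ t ≫
      eqToHom (congrArg S.obj (functor_obj_hex E Γ.πR c X (X c) a).symm)) hexagon
  have hX := updF_obj_eq_obj_update E X c (X c)
  rw [Function.update_eq_self] at hX
  rw [functor_map_hex E ha le_rfl rfl diag_eq_hex l,
    functor_map_hex E le_rfl ha rfl diag_update_eq_hex l',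
    functor_map_hex E le_rfl ha diag_eq_hex rfl r,
    functor_map_hex E ha le_rfl diag_update_eq_hex rfl r',
    along_eq_eqToHom_conj α E X hX,
    along_eq_eqToHom_conj α E _ (updF_obj_eq_obj_update E X c a)]
  simpa only [Functor.map_comp, eqToHom_map, Category.assoc, eqToHom_trans_assoc, homOfLE_refl,
    E.map_id] using hexagon'

theorem map_comp_along (hα : IsGDin Γ T S α) (E : J ⥤ B) (ha : a ≤ X c)
    {U : SignedTuple sL J} {W : SignedTuple sR J}
    (hU : U ⟶ diag sL Γ.πL X) (hU' : U ⟶ diag sL Γ.πL (Function.update X c a))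
    (hW : diag sR Γ.πR X ⟶ W) (hW' : diag sR Γ.πR (Function.update X c a) ⟶ W) :
    T.map ((functor E sL).map hU) ≫ along α E X ≫ S.map ((functor E sR).map hW) =
      T.map ((functor E sL).map hU') ≫ along α E (Function.update X c a) ≫
        S.map ((functor E sR).map hW') := by
  let u : U ⟶ hex sL Γ.πL c X a (X c) := homOfLE (le_hex (leOfHom hU) (leOfHom hU'))
  let w : hex sR Γ.πR c X (X c) a ⟶ W := homOfLE (hex_le (leOfHom hW) (leOfHom hW'))
  let l : hex sL Γ.πL c X a (X c) ⟶ diag sL Γ.πL X :=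
    homOfLE (by rw [diag_eq_hex (c := c)]; exact hex_le_hex ha le_rfl)
  let l' : hex sL Γ.πL c X a (X c) ⟶ diag sL Γ.πL (Function.update X c a) :=
    homOfLE (by rw [diag_update_eq_hex]; exact hex_le_hex le_rfl ha)
  let r : diag sR Γ.πR X ⟶ hex sR Γ.πR c X (X c) a :=
    homOfLE (by rw [diag_eq_hex (c := c)]; exact hex_le_hex le_rfl ha)
  let r' : diag sR Γ.πR (Function.update X c a) ⟶ hex sR Γ.πR c X (X c) a :=
    homOfLE (by rw [diag_update_eq_hex]; exact hex_le_hex ha le_rfl)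
  have middle := congrArg (fun t => T.map ((functor E sL).map u) ≫ t ≫
    S.map ((functor E sR).map w)) (hα.map_hex_comp_along E ha l l' r r')
  rw [Subsingleton.elim hU (u ≫ l), Subsingleton.elim hU' (u ≫ l'),
    Subsingleton.elim hW (r ≫ w), Subsingleton.elim hW' (r' ≫ w)]
  simpa only [Functor.map_comp, Category.assoc] using middle

end IsGDin

end Family

section WellFounded

variable {α : Type*} {r : α → α → Prop}

theorem wellFounded_of_forall_not_transGen [Finite α] (h : ∀ a, ¬ Relation.TransGen r a a) :
    WellFounded r :=
  haveI : Std.Irrefl (Relation.TransGen r) := ⟨h⟩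
  Subrelation.wf .single (Finite.wellFounded_of_trans_of_irrefl (Relation.TransGen r))

theorem exists_rel_transGen_self {a : α} (h : Relation.TransGen r a a) :
    ∃ b, r a b ∧ Relation.TransGen r b b := by
  obtain ⟨b, hab, hba⟩ := Relation.TransGen.head'_iff.1 h
  exact ⟨b, hab, .tail' hba hab⟩

theorem exists_rel_transGen_self' {a : α} (h : Relation.TransGen r a a) :
    ∃ b, r b a ∧ Relation.TransGen r b b := by
  obtain ⟨b, hab, hba⟩ := Relation.TransGen.tail'_iff.1 h
  exact ⟨b, hba, .head' hba hab⟩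

end WellFounded

section Reduction

variable {m n p gΦ gΨ : ℕ} {sx : Fin m → Bool} {sy : Fin n → Bool} {sz : Fin p → Bool}
  {Φ : GGraph m n gΦ sx sy} {Ψ : GGraph n p gΨ sy sz}

variable (Φ Ψ) in
/-- The constraint imposed on components of `Φ` and `Ψ` by a place `y_j` they share: in a term of
`ℳ₀` the second one can be occupied by `A` only if the first one is. -/
inductive Blocks : Fin Φ.k ⊕ Fin Ψ.k → Fin Φ.k ⊕ Fin Ψ.k → Prop
  | pos (j : Fin n) (h : sy j = true) : Blocks (.inl (Φ.πR j)) (.inr (Ψ.πL j))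
  | neg (j : Fin n) (h : sy j = false) : Blocks (.inr (Ψ.πL j)) (.inl (Φ.πR j))

namespace MZ

/-- The joint tuple of the objects `X⃗` and `Y⃗` in a term of `ℳ₀`. -/
def val (z : MZ Φ Ψ) : Fin Φ.k ⊕ Fin Ψ.k → Bool := Sum.elim z.Xv z.Yv

theorem val_injective : Function.Injective (val : MZ Φ Ψ → _) := by
  rintro ⟨X, Y, _⟩ ⟨X', Y', _⟩ h
  obtain ⟨rfl, rfl⟩ := Sum.elim_eq_iff.1 h
  rfl

theorem val_le_val (z : MZ Φ Ψ) {e e' : Fin Φ.k ⊕ Fin Ψ.k} (h : Blocks Φ Ψ e e') :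
    z.val e ≤ z.val e' := by
  cases h with
  | pos j h => simpa [val, Bool.le_iff_imp] using (z.compat j).1 h
  | neg j h => simpa [val, Bool.le_iff_imp] using (z.compat j).2 h

/-- The term of `ℳ₀` with a given joint tuple of objects. -/
def ofVal (x : Fin Φ.k ⊕ Fin Ψ.k → Bool) (hx : ∀ e e', Blocks Φ Ψ e e' → x e ≤ x e') :
    MZ Φ Ψ where
  Xv := x ∘ .inl
  Yv := x ∘ .inr
  compat j :=
    ⟨fun h => by simpa [Bool.le_iff_imp] using hx _ _ (.pos j h),
      fun h => by simpa [Bool.le_iff_imp] using hx _ _ (.neg j h)⟩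

theorem val_ofVal (x : Fin Φ.k ⊕ Fin Ψ.k → Bool) (hx : ∀ e e', Blocks Φ Ψ e e' → x e ≤ x e') :
    (ofVal x hx).val = x :=
  Sum.elim_comp_inl_inr x

theorem update_val_le {z : MZ Φ Ψ} {e : Fin Φ.k ⊕ Fin Ψ.k}
    (hmin : ∀ e', Blocks Φ Ψ e' e → z.val e' = false) {a b : Fin Φ.k ⊕ Fin Ψ.k}
    (h : Blocks Φ Ψ a b) :
    Function.update z.val e false a ≤ Function.update z.val e false b := by
  rcases eq_or_ne a e with rfl | ha
  · simp
  · rcases eq_or_ne b e with rfl | hb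
    · simp [ha, hmin a h]
    · simpa [ha, hb] using z.val_le_val h

theorem dStep_of_val_eq_update {z z' : MZ Φ Ψ} {e : Fin Φ.k ⊕ Fin Ψ.k} (he : z.val e = true)
    (hmin : ∀ e', Blocks Φ Ψ e' e → z.val e' = false)
    (hz' : z'.val = Function.update z.val e false) : DStep z z' := by
  cases e with
  | inl i =>
    obtain ⟨hX, hY⟩ := Sum.elim_eq_iff.1 (hz'.trans (Sum.update_elim_inl ..))
    have hi : z.Xv i = true := he
    refine .alphaStep z z' i hi (fun j hj hji => ?_) (fun j hj hji => ?_) hX hY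
    · simp [MZ.g, hj, hji, hi]
    · have hy : z.Yv (Ψ.πL j) = false := hmin (.inr _) (hji ▸ .neg j hj)
      simp [MZ.h, hj, hji, hi, hy]
  | inr i =>
    obtain ⟨hX, hY⟩ := Sum.elim_eq_iff.1 (hz'.trans (Sum.update_elim_inr ..))
    have hi : z.Yv i = true := he
    refine .betaStep z z' i hi (fun j hj hji => ?_) (fun l hl hli => ?_) hY hX
    · have hx : z.Xv (Φ.πR j) = false := hmin (.inl _) (hji ▸ .pos j hj)
      simp [MZ.h, hj, hji, hi, hx]
    · simp [MZ.t, hl, hli, hi]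

theorem reduces_cfnatRHS (hwf : WellFounded (Blocks Φ Ψ)) (z : MZ Φ Ψ) :
    Relation.ReflTransGen DStep z (cfnatRHS Φ Ψ) := by
  induction hz : z.val using WellFoundedLT.induction generalizing z with
  | ind x ih =>
    subst hz
    rcases {e | z.val e = true}.eq_empty_or_nonempty with h | h
    · have : z = cfnatRHS Φ Ψ := val_injective <| funext fun e => by
        have := Set.eq_empty_iff_forall_notMem.1 h e
        cases e <;> simpa [cfnatRHS, val] using this
      rw [this]
    · obtain ⟨e, he, hmin⟩ := hwf.has_min _ h
      have hmin' : ∀ e', Blocks Φ Ψ e' e → z.val e' = false :=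
        fun e' he' => by simpa using fun h => hmin e' h he'
      let z' : MZ Φ Ψ := ofVal _ fun _ _ => update_val_le hmin'
      have hz' : z'.val = Function.update z.val e false := val_ofVal _ _
      exact .head (dStep_of_val_eq_update he hmin' hz')
        (ih _ (hz' ▸ update_lt_self_iff.2 (he ▸ rfl)) z' rfl)

end MZ

end Reduction

section Soundness

variable {m n p gΦ gΨ : ℕ} {sx : Fin m → Bool} {sy : Fin n → Bool} {sz : Fin p → Bool}
  {Φ : GGraph m n gΦ sx sy} {Ψ : GGraph n p gΨ sy sz}
  {F : (∀ i : Fin m, VarCat B (sx i)) ⥤ B} {G : (∀ j : Fin n, VarCat B (sy j)) ⥤ B}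
  {H : (∀ l : Fin p, VarCat B (sz l)) ⥤ B}
  {γ : ∀ A : Fin Φ.k → B, F.obj (diagObj sx Φ.πL A) ⟶ G.obj (diagObj sy Φ.πR A)}
  {δ : ∀ A : Fin Ψ.k → B, G.obj (diagObj sy Ψ.πL A) ⟶ H.obj (diagObj sz Ψ.πR A)}

/-- The functor picking out the morphism `f`, the objects `false` and `true` of `Bool` standing for
`A` and `C`. -/
def arrowFunctor {P Q : B} (f : P ⟶ Q) : Bool ⥤ B where
  obj b := if b then Q else P
  map {a b} h := match a, b, leOfHom h with
    | false, false, _ => 𝟙 P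
    | false, true, _ => f
    | true, true, _ => 𝟙 Q
    | true, false, h => absurd h (by decide)
  map_id a := by cases a <;> rfl
  map_comp {a b c} h h' := by
    cases a <;> cases b <;> cases c <;> first
      | exact absurd (leOfHom h) (by decide)
      | exact absurd (leOfHom h') (by decide)
      | simp

namespace MZ

theorem diag_le_diag (z : MZ Φ Ψ) : diag sy Φ.πR z.Xv ≤ diag sy Ψ.πL z.Yv :=
  fun j => ⟨fun h => z.val_le_val (.pos j h), fun h => z.val_le_val (.neg j h)⟩

variable (γ δ) in
/-- The morphism of `B` denoted by a term of `ℳ₀` when `α`, `β` and `f` are interpreted as `γ`,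
`δ` and the arrow of `E`. -/
def interp (E : Bool ⥤ B) (z : MZ Φ Ψ) :
    F.obj ((functor E sx).obj (const sx ⊥ ⊤)) ⟶ H.obj ((functor E sz).obj (const sz ⊤ ⊥)) :=
  F.map ((functor E sx).map (homOfLE (bot_top_le (diag sx Φ.πL z.Xv)))) ≫
    along γ E z.Xv ≫
    G.map ((functor E sy).map (homOfLE z.diag_le_diag)) ≫
    along δ E z.Yv ≫
    H.map ((functor E sz).map (homOfLE (le_top_bot (diag sz Ψ.πR z.Yv))))

theorem interp_eq_of_dStep (hγ : IsGDin Φ F G γ) (hδ : IsGDin Ψ G H δ) (E : Bool ⥤ B)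
    {z z' : MZ Φ Ψ} (h : DStep z z') : z.interp γ δ E = z'.interp γ δ E := by
  obtain ⟨X, Y, hz⟩ := z
  obtain ⟨X', Y', hz'⟩ := z'
  cases h with
  | alphaStep i _ _ _ hX hY =>
    obtain rfl : X' = Function.update X i false := hX
    obtain rfl : Y' = Y := hY
    have dinaturality := hγ.map_comp_along E (c := i) (X := X) (Bool.false_le _)
      (homOfLE (bot_top_le _)) (homOfLE (bot_top_le _)) (homOfLE (diag_le_diag ⟨X, Y', hz⟩))
      (homOfLE (diag_le_diag ⟨_, Y', hz'⟩))
    simpa only [interp, Category.assoc] using congrArg (· ≫ along δ E Y' ≫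
      H.map ((functor E sz).map (homOfLE (le_top_bot _)))) dinaturality
  | betaStep i _ _ _ hY hX =>
    obtain rfl : X' = X := hX
    obtain rfl : Y' = Function.update Y i false := hY
    have dinaturality := hδ.map_comp_along E (c := i) (X := Y) (Bool.false_le _)
      (homOfLE (diag_le_diag ⟨X', Y, hz⟩)) (homOfLE (diag_le_diag ⟨X', _, hz'⟩))
      (homOfLE (le_top_bot _)) (homOfLE (le_top_bot _))
    exact congrArg (F.map ((functor E sx).map (homOfLE (bot_top_le _))) ≫ along γ E X' ≫ ·)
      dinaturality

theorem interp_eq_of_reduces (hγ : IsGDin Φ F G γ) (hδ : IsGDin Ψ G H δ) (E : Bool ⥤ B)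
    {z z' : MZ Φ Ψ} (h : Relation.ReflTransGen DStep z z') :
    z.interp γ δ E = z'.interp γ δ E := by
  induction h with
  | refl => rfl
  | tail _ hstep ih => exact ih.trans (interp_eq_of_dStep hγ hδ E hstep)

theorem interp_of_const (E : Bool ⥤ B) {z : MZ Φ Ψ} {b : Bool} (hX : z.Xv = fun _ => b)
    (hY : z.Yv = fun _ => b) :
    z.interp γ δ E =
      F.map (tupHom sx (E.map (homOfLE (Bool.false_le b))) (E.map (homOfLE (Bool.le_true b)))) ≫
        (γ (fun _ => E.obj b) ≫ δ (fun _ => E.obj b)) ≫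
        H.map (tupHom sz (E.map (homOfLE (Bool.le_true b)))
          (E.map (homOfLE (Bool.false_le b)))) := by
  obtain ⟨X, Y, hz⟩ := z
  obtain rfl : X = fun _ => b := hX
  obtain rfl : Y = fun _ => b := hY
  rw [interp, ← functor_map_const E (Bool.false_le b) (Bool.le_true b)
      (homOfLE (bot_top_le (const sx b b))),
    ← functor_map_const E (Bool.le_true b) (Bool.false_le b)
      (homOfLE (le_top_bot (const sz b b))), Category.assoc]
  refine congrArg (F.map _ ≫ along γ E _ ≫ ·) ?_
  refine (congrArg (· ≫ _) (?_ : _ = 𝟙 _)).trans (Category.id_comp _)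
  rw [← G.map_id, ← (functor E sy).map_id]
  rfl

end MZ

theorem provides_of_reduces
    (h : Relation.ReflTransGen DStep (cfnatLHS Φ Ψ) (cfnatRHS Φ Ψ)) : Provides.{u, v} Φ Ψ := by
  intro B _ F G H γ δ hγ hδ P Q f
  have hexagon := MZ.interp_eq_of_reduces hγ hδ (arrowFunctor f) h
  rw [MZ.interp_of_const _ (b := true) rfl rfl, MZ.interp_of_const _ (b := false) rfl rfl]
    at hexagon
  exact hexagon

end Soundness

/-- The objects of the category of the countermodel: a morphism is an inequality of levels in
`Bool` together with an arbitrary truth value, and composition is conjunction of truth values.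
The levels `false` and `true` play the roles of `A` and `C`. -/
structure Weighted : Type u where
  level : Bool

namespace Weighted

/-- A morphism of `Weighted`: a truth value and an inequality of levels. -/
@[ext]
structure Hom (X Y : Weighted.{u}) : Type v where
  weight : Prop
  le : X.level ≤ Y.level

instance : Category.{v} Weighted.{u} where
  Hom := Hom
  id _ := ⟨True, le_rfl⟩
  comp f g := ⟨f.weight ∧ g.weight, f.le.trans g.le⟩
  id_comp f := Hom.ext (true_and f.weight)
  comp_id f := Hom.ext (and_true f.weight)
  assoc _ _ _ := Hom.ext and_assoc.eq

/-- The truth value carried by a morphism. -/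
def weight {X Y : Weighted.{u}} (f : X ⟶ Y) : Prop := Hom.weight f

section

variable {X Y Z : Weighted.{u}}

theorem hom_ext {f g : X ⟶ Y} (h : weight f ↔ weight g) : f = g := Hom.ext (propext h)

theorem hom_ext_iff {f g : X ⟶ Y} : f = g ↔ (weight f ↔ weight g) :=
  ⟨fun h => h ▸ Iff.rfl, hom_ext⟩

theorem weight_id : weight (𝟙 X) := trivial

theorem weight_comp (f : X ⟶ Y) (g : Y ⟶ Z) : weight (f ≫ g) ↔ weight f ∧ weight g := Iff.rfl

theorem weight_eqToHom (h : X = Y) : weight (eqToHom h) := by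
  subst h
  exact weight_id

end

/-- The level of an object of `Weighted` or of its opposite. -/
def levelAt : (b : Bool) → VarCat.{u, v} Weighted.{u} b → Bool
  | true, X => X.level
  | false, X => X.unop.level

theorem levelAt_pairObj (b : Bool) (X Y : Weighted.{u}) :
    levelAt.{u, v} b (pairObj b X Y) = bif b then X.level else Y.level := by
  cases b <;> rfl

theorem levelAt_hexObj (s : ι → Bool) (pl : ι → Fin k) (c : Fin k) (A : Fin k → Weighted.{u})
    (X Y : Weighted.{u}) (j : ι) :
    levelAt.{u, v} (s j) (hexObj s pl c A X Y j) =
      if pl j = c then bif s j then X.level else Y.level else (A (pl j)).level := by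
  by_cases h : pl j = c
  · simp [hexObj, h, levelAt_pairObj]
  · simp [hexObj, h, levelAt_pairObj]

theorem levelAt_eq_iff {b : Bool} {X Y Z : VarCat.{u, v} Weighted.{u} b} (f : X ⟶ Y) (g : Y ⟶ Z) :
    levelAt b X = levelAt b Z ↔ levelAt b X = levelAt b Y ∧ levelAt b Y = levelAt b Z := by
  refine ⟨fun h => ?_, fun h => h.1.trans h.2⟩
  cases b with
  | true => exact ⟨le_antisymm (Hom.le f) (h ▸ Hom.le g), le_antisymm (Hom.le g) (h ▸ Hom.le f)⟩
  | false =>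
    exact ⟨le_antisymm (h ▸ Hom.le g.unop) (Hom.le f.unop),
      le_antisymm (h ▸ Hom.le f.unop) (Hom.le g.unop)⟩

/-- The functor of several variables sending a tuple of morphisms to the assertion that none of
those at the places in `N` changes the level. -/
def levelFunctor (s : ι → Bool) (N : Set ι) :
    Functor.{v, v} (∀ j, VarCat.{u, v} Weighted.{u} (s j)) Weighted.{u} where
  obj _ := ⟨false⟩
  map {X Y} _ := ⟨∀ j ∈ N, levelAt (s j) (X j) = levelAt (s j) (Y j), le_rfl⟩
  map_id _ := hom_ext (iff_true_intro fun _ _ => rfl)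
  map_comp f g :=
    hom_ext ((forall₂_congr fun j _ => levelAt_eq_iff (f j) (g j)).trans forall₂_and)

theorem weight_map_hexHom {s : ι → Bool} {N : Set ι} {pl : ι → Fin k} {c : Fin k}
    {A : Fin k → Weighted.{u}} {P P' R R' : Weighted.{u}} (f : P ⟶ P') (g : R' ⟶ R) :
    weight.{u, v} ((levelFunctor s N).map (hexHom s pl c A f g)) ↔
      ((∃ j ∈ N, pl j = c ∧ s j = true) → P.level = P'.level) ∧
        ((∃ j ∈ N, pl j = c ∧ s j = false) → R.level = R'.level) := by
  change (∀ j ∈ N, levelAt.{u, v} (s j) (hexObj s pl c A P R j) =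
    levelAt.{u, v} (s j) (hexObj s pl c A P' R' j)) ↔ _
  simp only [levelAt_hexObj]
  constructor
  · intro h
    constructor
    · rintro ⟨j, hj, hc, hs⟩
      simpa [hc, hs] using h j hj
    · rintro ⟨j, hj, hc, hs⟩
      simpa [hc, hs] using h j hj
  · rintro ⟨h, h'⟩ j hj
    split_ifs with hc
    · cases hs : s j with
      | true => simpa using h ⟨j, hj, hc, hs⟩
      | false => simpa using h' ⟨j, hj, hc, hs⟩
    · rfl

theorem isGDin_iff {m n g : ℕ} {sL : Fin m → Bool} {sR : Fin n → Bool} {Γ : GGraph m n g sL sR}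
    {T : Functor.{v, v} (∀ i, VarCat.{u, v} Weighted.{u} (sL i)) Weighted.{u}}
    {S : Functor.{v, v} (∀ j, VarCat.{u, v} Weighted.{u} (sR j)) Weighted.{u}}
    {α : ∀ A : Fin Γ.k → Weighted.{u},
      T.obj (diagObj sL Γ.πL A) ⟶ S.obj (diagObj sR Γ.πR A)} :
    IsGDin Γ T S α ↔ ∀ (c : Fin Γ.k) (A : Fin Γ.k → Weighted.{u}) (P Q : Weighted.{u}) (f : P ⟶ Q),
      weight (T.map (hexHom sL Γ.πL c A f (𝟙 Q))) ∧ weight (α (updF A c Q)) ∧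
          weight (S.map (hexHom sR Γ.πR c A (𝟙 Q) f)) ↔
        weight (T.map (hexHom sL Γ.πL c A (𝟙 P) f)) ∧ weight (α (updF A c P)) ∧
          weight (S.map (hexHom sR Γ.πR c A f (𝟙 P))) := by
  have weight_hex {X₁ X₂ X₃ X₄ X₅ X₆ : Weighted.{u}} (a : X₁ ⟶ X₂) (h : X₂ = X₃) (b : X₃ ⟶ X₄)
      (h' : X₄ = X₅) (c : X₅ ⟶ X₆) :
      weight (a ≫ eqToHom h ≫ b ≫ eqToHom h' ≫ c) ↔ weight a ∧ weight b ∧ weight c := by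
    simp only [weight_comp, weight_eqToHom, true_and]
  refine forall₅_congr fun c A P Q f => ?_
  rw [hom_ext_iff]
  exact iff_congr (weight_hex ..) (weight_hex ..)

end Weighted

section Countermodel

open Weighted

variable {m n p gΦ gΨ : ℕ} {sx : Fin m → Bool} {sy : Fin n → Bool} {sz : Fin p → Bool}
  (Φ : GGraph m n gΦ sx sy) (Ψ : GGraph n p gΨ sy sz)

/-- The component `e` lies on a cycle of `Blocks`. -/
def OnCycle (e : Fin Φ.k ⊕ Fin Ψ.k) : Prop := Relation.TransGen (Blocks Φ Ψ) e e

/-- The places `y_j` both of whose components lie on cycles of `Blocks`. -/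
def cyclePlaces : Set (Fin n) := {j | OnCycle Φ Ψ (.inl (Φ.πR j)) ∧ OnCycle Φ Ψ (.inr (Ψ.πL j))}

variable {Φ Ψ}

-- A cycle of `Blocks` enters and leaves a component through places of opposite sign; hence a
-- component on a cycle has places of both signs in `cyclePlaces`, and the two sides of its
-- hexagon detect the same changes of level.
theorem exists_mem_cyclePlaces_left_iff {c : Fin Φ.k} (b : Bool) :
    (∃ j ∈ cyclePlaces Φ Ψ, Φ.πR j = c ∧ sy j = b) ↔ OnCycle Φ Ψ (.inl c) := by
  refine ⟨fun ⟨j, hj, hc, _⟩ => hc ▸ hj.1, fun hc => ?_⟩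
  cases b with
  | true =>
    obtain ⟨_, ⟨j, hj⟩, hd⟩ := exists_rel_transGen_self hc
    exact ⟨j, ⟨hc, hd⟩, rfl, hj⟩
  | false =>
    obtain ⟨_, _ | ⟨j, hj⟩, hd⟩ := exists_rel_transGen_self' hc
    exact ⟨j, ⟨hc, hd⟩, rfl, hj⟩

theorem exists_mem_cyclePlaces_right_iff {d : Fin Ψ.k} (b : Bool) :
    (∃ j ∈ cyclePlaces Φ Ψ, Ψ.πL j = d ∧ sy j = b) ↔ OnCycle Φ Ψ (.inr d) := by
  refine ⟨fun ⟨j, hj, hd, _⟩ => hd ▸ hj.2, fun hd => ?_⟩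
  cases b with
  | true =>
    obtain ⟨_, ⟨j, hj⟩, hc⟩ := exists_rel_transGen_self' hd
    exact ⟨j, ⟨hc, hd⟩, rfl, hj⟩
  | false =>
    obtain ⟨_, _ | ⟨j, hj⟩, hc⟩ := exists_rel_transGen_self hd
    exact ⟨j, ⟨hc, hd⟩, rfl, hj⟩

variable (Φ Ψ) in
/-- The functor `G` of the countermodel: an argument `f` is detected at the cyclic places only. -/
abbrev cycleFunctor : Functor.{v, v} (∀ j, VarCat.{u, v} Weighted.{u} (sy j)) Weighted.{u} :=
  levelFunctor sy (cyclePlaces Φ Ψ)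

/-- The functors `F` and `H` of the countermodel, which detect nothing. -/
abbrev constFunctor (s : ι → Bool) :
    Functor.{v, v} (∀ j, VarCat.{u, v} Weighted.{u} (s j)) Weighted.{u} :=
  (Functor.const _).obj ⟨false⟩

variable (Φ Ψ) in
/-- The transformation `γ` of the countermodel; the functors involved have only one value, so it
can consist of identities. -/
def cycleLeft (A : Fin Φ.k → Weighted.{u}) :
    (constFunctor.{u, v} sx).obj (diagObj sx Φ.πL A) ⟶
      (cycleFunctor.{u, v} Φ Ψ).obj (diagObj sy Φ.πR A) :=
  𝟙 (⟨false⟩ : Weighted.{u})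

variable (Φ Ψ) in
/-- The transformation `δ` of the countermodel, which records whether `A` (the level `false`)
occupies some component of `Ψ` lying on a cycle. -/
def cycleRight (A : Fin Ψ.k → Weighted.{u}) :
    (cycleFunctor.{u, v} Φ Ψ).obj (diagObj sy Ψ.πL A) ⟶
      (constFunctor.{u, v} sz).obj (diagObj sz Ψ.πR A) :=
  ⟨∃ d, OnCycle Φ Ψ (.inr d) ∧ (A d).level = false, le_rfl⟩

theorem isGDin_cycleLeft : IsGDin Φ (constFunctor.{u, v} sx) (cycleFunctor.{u, v} Φ Ψ)
    (cycleLeft Φ Ψ) := by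
  refine isGDin_iff.2 fun c A P Q f => ?_
  simp only [weight_map_hexHom, exists_mem_cyclePlaces_left_iff, implies_true, true_and, and_true,
    eq_comm (a := Q.level)]
  exact Iff.rfl

theorem isGDin_cycleRight :
    IsGDin Ψ (cycleFunctor.{u, v} Φ Ψ) (constFunctor.{u, v} sz) (cycleRight Φ Ψ) := by
  refine isGDin_iff.2 fun d A P Q f => ?_
  have weight_congr (h : OnCycle Φ Ψ (.inr d) → P.level = Q.level) :
      weight (cycleRight.{u, v} (sz := sz) Φ Ψ (updF A d Q)) ↔
        weight (cycleRight.{u, v} (sz := sz) Φ Ψ (updF A d P)) := by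
    refine exists_congr fun d' => and_congr_right fun hd' => ?_
    rcases eq_or_ne d' d with rfl | hne
    · simp [updF, h hd']
    · simp [updF, hne]
  simp only [weight_map_hexHom, exists_mem_cyclePlaces_right_iff, implies_true, true_and, and_true,
    eq_comm (a := Q.level)]
  exact and_congr_right fun h => and_congr (weight_congr h) Iff.rfl

theorem Provides.not_onCycle (h : Provides.{u, v} Φ Ψ) (e : Fin Φ.k ⊕ Fin Ψ.k) :
    ¬ OnCycle Φ Ψ e := by
  intro he
  obtain ⟨d, hd⟩ : ∃ d, OnCycle Φ Ψ (.inr d) := by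
    cases e with
    | inl c =>
      obtain ⟨_, ⟨j, _⟩, hd⟩ := exists_rel_transGen_self he
      exact ⟨_, hd⟩
    | inr d => exact ⟨d, he⟩
  have hexagon := h _ _ _ (cycleLeft Φ Ψ) (cycleRight.{u, v} (sz := sz) Φ Ψ)
    isGDin_cycleLeft isGDin_cycleRight ⟨false⟩ ⟨true⟩ ⟨True, Bool.false_le _⟩
  obtain ⟨_, ⟨_, _, _, htrue⟩, _⟩ :=
    (hom_ext_iff.1 hexagon).2 ⟨trivial, ⟨trivial, d, hd, rfl⟩, trivial⟩
  exact Bool.noConfusion htrue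

end Countermodel

section Nat7

variable {m n p gΦ gΨ : ℕ} {sx : Fin m → Bool} {sy : Fin n → Bool} {sz : Fin p → Bool}
variable (Φ : GGraph m n gΦ sx sy) (Ψ : GGraph n p gΨ sy sz)

theorem provides_iff_D_reduces_general :
    Provides.{u, v} Φ Ψ ↔
      Relation.ReflTransGen (DStep (Φ := Φ) (Ψ := Ψ)) (cfnatLHS Φ Ψ) (cfnatRHS Φ Ψ) :=
  ⟨fun h => MZ.reduces_cfnatRHS (wellFounded_of_forall_not_transGen h.not_onCycle) _,
    provides_of_reduces⟩

/-- Corollary to Theorem 2.1 of the paper, together with the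
discussion of `(cfnat)`.  The property `P(Φ,Ψ)` — that the single-component
amalgamation `Φ+Ψ` provides g-dinaturality — is decidable; it holds if and only if
the left-hand side of the equation `(cfnat)` reduces by `D` reduction to its
right-hand side.  (The latter condition is manifestly decidable: `D` reduction is a
strongly normalizing, effectively computable rewriting on the finitely many terms of
`ℳ₀`.) -/
theorem provides_iff_D_reduces
    (hconn : AmalgConnected Φ Ψ) :
    Provides.{u, v} Φ Ψ ↔
      Relation.ReflTransGen (DStep (Φ := Φ) (Ψ := Ψ)) (cfnatLHS Φ Ψ) (cfnatRHS Φ Ψ) :=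
  provides_iff_D_reduces_general Φ Ψ

end Nat7
end GDin
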